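/- arXiv:1204.6459 — 12 statements merged into one kernel-verified Lean document; each statement's English description precedes it below -/
import Mathlib

section
/- Let F be a finite field with q elements, let 1 ≤ k and 2k−1 ≤ n ≤ q, let x ∈ F^n have pairwise distinct entries and y ∈ F^n have all entries nonzero. Then the square code of GRS_k(x,y) satisfies ⟨GRS_k(x,y)²⟩ = GRS_{2k−1}(x, y⋆y). -/
/-!
Evaluation turns products of polynomials into star products of codewords (with multiplier `y * y`).
A product of two polynomials of degree at most `k - 1` has degree at most `2 * k - 2`, which gives
one inclusion. For the other, the polynomials of degree at most `2 * k - 2` are spanned by the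
monomials `X ^ m` with `m ≤ 2 * k - 2`, and each of these is a product of two monomials of degree
at most `k - 1`.
-/

/-- The star product code `⟨A ⋆ B⟩`. -/
noncomputable def starCode {F : Type*} [Field F] {n : ℕ} (A B : Submodule F (Fin n → F)) :
    Submodule F (Fin n → F) :=
  Submodule.span F {w | ∃ a ∈ A, ∃ b ∈ B, w = a * b}

/-- The evaluation map `p ↦ (y_1 p(x_1), …, y_n p(x_n))`. -/
noncomputable def GRSevalMap {F : Type*} [Field F] {n : ℕ} (x y : Fin n → F) :
    Polynomial F →ₗ[F] (Fin n → F) where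
  toFun := fun p => fun i => y i * p.eval (x i)
  map_add' := fun p q => by funext i; simp [mul_add]
  map_smul' := fun c p => by funext i; simp [Polynomial.eval_smul, smul_eq_mul]; ring

/-- The generalized Reed–Solomon code `GRS_k(x,y)`:
all `(y_1 p(x_1), …, y_n p(x_n))` for `p` of degree `≤ k - 1`. -/
noncomputable def GRS {F : Type*} [Field F] (n k : ℕ) (x y : Fin n → F) :
    Submodule F (Fin n → F) :=
  Submodule.map (GRSevalMap x y) (Polynomial.degreeLT F k)

/-- if `1 ≤ k`, `2k - 1 ≤ n ≤ q`, `x` has pairwise distinct entries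
and `y` has nonzero entries, then `⟨GRS_k(x,y)²⟩ = GRS_{2k-1}(x, y ⋆ y)`. -/
theorem square_GRS {F : Type*} [Field F] [Fintype F] (q n k : ℕ)
    (hq : Fintype.card F = q) (hk : 1 ≤ k) (hkn : 2 * k - 1 ≤ n) (hn : n ≤ q)
    (x y : Fin n → F) (hx : Function.Injective x) (hy : ∀ i, y i ≠ 0) :
    starCode (GRS n k x y) (GRS n k x y) = GRS n (2 * k - 1) x (y * y) := by
  apply le_antisymm
  · refine Submodule.span_le.2 ?_
    rintro _ ⟨_, ⟨p, hp, rfl⟩, _, ⟨r, hr, rfl⟩, rfl⟩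
    refine ⟨p * r, ?_, ?_⟩
    · have hp' := Polynomial.mem_degreeLT.1 hp
      have hr' := Polynomial.mem_degreeLT.1 hr
      refine Polynomial.mem_degreeLT.2 ?_
      by_cases hp0 : p = 0
      · simpa [hp0] using WithBot.bot_lt_coe (2 * k - 1)
      by_cases hr0 : r = 0
      · simpa [hr0] using WithBot.bot_lt_coe (2 * k - 1)
      rw [← Polynomial.natDegree_lt_iff_degree_lt hp0] at hp'
      rw [← Polynomial.natDegree_lt_iff_degree_lt hr0] at hr'
      rw [← Polynomial.natDegree_lt_iff_degree_lt (mul_ne_zero hp0 hr0),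
        Polynomial.natDegree_mul hp0 hr0]
      omega
    · funext i
      simp only [GRSevalMap, LinearMap.coe_mk, AddHom.coe_mk, Pi.mul_apply, Polynomial.eval_mul]
      ring
  · classical
    rw [GRS, Polynomial.degreeLT_eq_span_X_pow, Submodule.map_span_le]
    intro p hp
    obtain ⟨m, hm, rfl⟩ := Finset.mem_image.1 (Finset.mem_coe.1 hp)
    rw [Finset.mem_range] at hm
    have hmem : ∀ j, j < k → GRSevalMap x y (Polynomial.X ^ j) ∈ GRS n k x y := fun j hj =>
      Submodule.mem_map_of_mem (Polynomial.mem_degreeLT.2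
        (by rw [Polynomial.degree_X_pow]; exact_mod_cast hj))
    -- Both exponents of `X ^ m = X ^ min m (k - 1) * X ^ (m - min m (k - 1))` are below `k`,
    -- since `m ≤ 2 * (k - 1)`.
    refine Submodule.subset_span ⟨_, hmem (min m (k - 1)) (by omega), _,
      hmem (m - min m (k - 1)) (by omega), ?_⟩
    funext i
    simp only [GRSevalMap, LinearMap.coe_mk, AddHom.coe_mk, Pi.mul_apply, Polynomial.eval_pow,
      Polynomial.eval_X]
    rw [mul_mul_mul_comm, ← pow_add, Nat.add_sub_cancel' (min_le_left _ _)]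
end

section
/- Let F be a finite field with q elements, let 1 ≤ k and 2k−1 ≤ n ≤ q, let x ∈ F^n have pairwise distinct entries and y ∈ F^n have all entries nonzero. Then the square code of GRS_k(x,y) has dimension exactly 2k−1, i.e. dim⟨GRS_k(x,y)²⟩ = 2k−1. -/
open Polynomial in
theorem finrank_GRS {F : Type*} [Field F] {n m : ℕ} (hm : m ≤ n) (x y : Fin n → F)
    (hx : Function.Injective x) (hy : ∀ i, y i ≠ 0) :
    Module.finrank F ↥(GRS n m x y) = m := by
  have hinj : Function.Injective ((GRSevalMap x y).domRestrict (degreeLT F m)) := by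
    rw [injective_iff_map_eq_zero]
    rintro ⟨p, hp⟩ h
    rw [mem_degreeLT] at hp
    have hp0 : p = 0 := by
      refine eq_zero_of_degree_lt_of_eval_index_eq_zero (v := x) Finset.univ hx.injOn ?_ ?_
      · refine hp.trans_le ?_
        simpa using hm
      · intro i _
        have hi : y i * p.eval (x i) = 0 := congrFun h i
        exact (mul_eq_zero.mp hi).resolve_left (hy i)
    exact Subtype.ext hp0
  have hrange : LinearMap.range ((GRSevalMap x y).domRestrict (degreeLT F m)) = GRS n m x y :=
    LinearMap.range_domRestrict _ _
  rw [← hrange, LinearMap.finrank_range_of_inj hinj, (degreeLTEquiv F m).finrank_eq,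
    Module.finrank_fin_fun]

theorem GRSevalMap_mul {F : Type*} [Field F] {n : ℕ} (x y : Fin n → F) (p r : Polynomial F) :
    GRSevalMap x (y * y) (p * r) = GRSevalMap x y p * GRSevalMap x y r := by
  funext i
  simp [GRSevalMap, Polynomial.eval_mul]
  ring

open Polynomial in
theorem starCode_GRS_self {F : Type*} [Field F] {n k : ℕ} (hk : 1 ≤ k) (x y : Fin n → F) :
    starCode (GRS n k x y) (GRS n k x y) = GRS n (2 * k - 1) x (y * y) := by
  classical
  apply le_antisymm
  · refine Submodule.span_le.mpr ?_
    rintro _ ⟨_, ⟨p, hp, rfl⟩, _, ⟨r, hr, rfl⟩, rfl⟩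
    refine ⟨p * r, ?_, GRSevalMap_mul x y p r⟩
    -- Passing to `natDegree ≤ k - 1` gives the sharp bound `2k - 2` on the product.
    obtain ⟨l, rfl⟩ : ∃ l, k = l + 1 := ⟨k - 1, by omega⟩
    have hp' : p.natDegree < l + 1 := by
      by_cases h0 : p = 0
      · simp [h0]
      · exact (natDegree_lt_iff_degree_lt h0).mpr (mem_degreeLT.mp hp)
    have hr' : r.natDegree < l + 1 := by
      by_cases h0 : r = 0
      · simp [h0]
      · exact (natDegree_lt_iff_degree_lt h0).mpr (mem_degreeLT.mp hr)
    rw [SetLike.mem_coe, mem_degreeLT]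
    refine lt_of_le_of_lt degree_le_natDegree ?_
    have h := natDegree_mul_le (p := p) (q := r)
    exact_mod_cast (by omega : (p * r).natDegree < 2 * (l + 1) - 1)
  · unfold GRS
    rw [degreeLT_eq_span_X_pow (n := 2 * k - 1), Submodule.map_span, Submodule.span_le]
    rintro _ ⟨_, hm, rfl⟩
    simp only [Finset.coe_image, Finset.coe_range, Set.mem_image, Set.mem_Iio] at hm
    obtain ⟨m, hm, rfl⟩ := hm
    have hX : ∀ i < k, (X ^ i : F[X]) ∈ degreeLT F k := fun i hi => by
      rw [mem_degreeLT, degree_X_pow]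
      exact_mod_cast hi
    refine Submodule.subset_span
      ⟨_, ⟨X ^ min m (k - 1), hX _ (by omega), rfl⟩,
        _, ⟨X ^ (m - min m (k - 1)), hX _ (by omega), rfl⟩, ?_⟩
    rw [← GRSevalMap_mul, ← pow_add, Nat.add_sub_cancel' (min_le_left _ _)]

/-- if `1 ≤ k`, `2k - 1 ≤ n ≤ q`, `x` has pairwise distinct entries
and `y` has nonzero entries, then `dim ⟨GRS_k(x,y)²⟩ = 2k - 1`. -/
theorem dim_square_GRS {F : Type*} [Field F] [Fintype F] (q n k : ℕ)
    (hq : Fintype.card F = q) (hk : 1 ≤ k) (hkn : 2 * k - 1 ≤ n) (hn : n ≤ q)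
    (x y : Fin n → F) (hx : Function.Injective x) (hy : ∀ i, y i ≠ 0) :
    Module.finrank F ↥(starCode (GRS n k x y) (GRS n k x y)) = 2 * k - 1 := by
  rw [starCode_GRS_self hk]
  exact finrank_GRS hkn x (y * y) hx fun i => mul_ne_zero (hy i) (hy i)
end

section
/- In the setup below, the square code of C_pub satisfies the inclusion ⟨C_pub²⟩ ⊆ ⟨C²⟩ + ⟨C ⋆ span(a)⟩ + span(a⋆a), where the right-hand side is the sum of the square code of C, the star product code of C with the line spanned by a, and the line spanned by a⋆a. -/
lemma exists_vecMul_inv_eq {F : Type*} [Field F] {n : ℕ} (a b : Fin n → F)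
    (hab : (1 + ∑ i, a i * b i) ≠ 0) (p : Fin n → F) :
    ∃ c : F, Matrix.vecMul p (1 + Matrix.vecMulVec b a)⁻¹ = p + c • a := by
  have hdet : IsUnit (1 + Matrix.vecMulVec b a).det := by
    rw [Matrix.vecMulVec_eq Unit, Matrix.det_one_add_replicateCol_mul_replicateRow]
    exact hab.isUnit
  set y := Matrix.vecMul p (1 + Matrix.vecMulVec b a)⁻¹ with hy
  have h : Matrix.vecMul y (1 + Matrix.vecMulVec b a) = p := by
    rw [hy, Matrix.vecMul_vecMul, Matrix.nonsing_inv_mul _ hdet, Matrix.vecMul_one]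
  rw [Matrix.vecMul_add, Matrix.vecMul_one, Matrix.vecMul_vecMulVec] at h
  refine ⟨-(y ⬝ᵥ b), ?_⟩
  rw [← h]
  simp

/-- in the Baldi et al. setup, the square code of the public code
satisfies `⟨C_pub²⟩ ⊆ ⟨C²⟩ + ⟨C ⋆ span(a)⟩ + span(a ⋆ a)`. -/
theorem square_Cpub_subset {F : Type*} [Field F] [Fintype F] {n : ℕ} (a b : Fin n → F)
    (hab : (1 + ∑ i, a i * b i) ≠ 0)
    (P : Matrix (Fin n) (Fin n) F) (hP : P = 1 + Matrix.vecMulVec b a)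
    (lam : Fin n → F) (hlam : lam = -(1 + ∑ i, a i * b i)⁻¹ • b)
    (C Cpub : Submodule F (Fin n → F))
    (hCpub : Cpub = C.map (Matrix.vecMulLinear P⁻¹)) :
    starCode Cpub Cpub ≤
      starCode C C ⊔ starCode C (Submodule.span F {a}) ⊔ Submodule.span F {a * a} := by
  subst hP hCpub
  refine Submodule.span_le.2 ?_
  rintro w ⟨_, ⟨p, hp, rfl⟩, _, ⟨q, hq, rfl⟩, rfl⟩
  obtain ⟨c, hc⟩ := exists_vecMul_inv_eq a b hab p
  obtain ⟨d, hd⟩ := exists_vecMul_inv_eq a b hab q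
  have ha : a ∈ Submodule.span F {a} := Submodule.mem_span_singleton_self a
  have expand : (p + c • a) * (q + d • a)
      = (p * q + (d • (p * a) + c • (q * a))) + (c * d) • (a * a) := by
    ext i
    simp only [Pi.mul_apply, Pi.add_apply, Pi.smul_apply, smul_eq_mul]
    ring
  rw [Matrix.vecMulLinear_apply, Matrix.vecMulLinear_apply, hc, hd, SetLike.mem_coe, expand]
  refine Submodule.add_mem_sup (Submodule.add_mem_sup ?_ (add_mem ?_ ?_)) ?_
  · exact Submodule.subset_span ⟨p, hp, q, hq, rfl⟩
  · exact Submodule.smul_mem _ _ (Submodule.subset_span ⟨p, hp, a, ha, rfl⟩)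
  · exact Submodule.smul_mem _ _ (Submodule.subset_span ⟨q, hq, a, ha, rfl⟩)
  · exact Submodule.smul_mem _ _ (Submodule.mem_span_singleton_self _)
end

section
/- In the setup below, with C = GRS_k(x,y) and assuming λ ∉ C^⊥, the square code of the public code satisfies dim⟨C_pub²⟩ ≤ 3k − 1. -/
/-- The dual code `C^⊥`. -/
def dualCode {F : Type*} [Field F] {n : ℕ} (C : Submodule F (Fin n → F)) :
    Submodule F (Fin n → F) where
  carrier := {u | ∀ c ∈ C, ∑ i, u i * c i = 0}
  zero_mem' := by intro c hc; simp
  add_mem' := by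
    intro u v hu hv c hc
    simp only [Pi.add_apply, add_mul, Finset.sum_add_distrib, hu c hc, hv c hc, add_zero]
  smul_mem' := by
    intro t u hu c hc
    simp only [Pi.smul_apply, smul_eq_mul, mul_assoc, ← Finset.mul_sum, hu c hc, mul_zero]

open Matrix

lemma finrank_GRS_le {F : Type*} [Field F] (n k : ℕ) (x y : Fin n → F) :
    Module.finrank F (GRS n k x y) ≤ k := by
  have : Module.Finite F (Polynomial.degreeLT F k) :=
    Module.Finite.equiv (Polynomial.degreeLTEquiv F k).symm
  refine (Submodule.finrank_map_le _ _).trans ?_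
  rw [(Polynomial.degreeLTEquiv F k).finrank_eq]
  simp

lemma mul_mem_GRS {F : Type*} [Field F] {n k : ℕ} {x y u v : Fin n → F} (hk : 1 ≤ k)
    (hu : u ∈ GRS n k x y) (hv : v ∈ GRS n k x y) :
    u * v ∈ GRS n (2 * k - 1) x (y * y) := by
  obtain ⟨p, hp, rfl⟩ := hu
  obtain ⟨r, hr, rfl⟩ := hv
  refine ⟨p * r, ?_, ?_⟩
  · simp only [SetLike.mem_coe, Polynomial.mem_degreeLT] at hp hr ⊢
    by_cases h0 : p * r = 0
    · rw [h0, Polynomial.degree_zero]; exact WithBot.bot_lt_coe _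
    · have hp0 := left_ne_zero_of_mul h0
      have hr0 := right_ne_zero_of_mul h0
      rw [← Polynomial.natDegree_lt_iff_degree_lt h0, Polynomial.natDegree_mul hp0 hr0]
      rw [← Polynomial.natDegree_lt_iff_degree_lt hp0] at hp
      rw [← Polynomial.natDegree_lt_iff_degree_lt hr0] at hr
      omega
  · funext i
    simp only [GRSevalMap, LinearMap.coe_mk, AddHom.coe_mk, Pi.mul_apply, Polynomial.eval_mul]
    ring

/-- The rank-one (Sherman–Morrison) inversion formula, applied to a row vector. -/
lemma vecMul_inv_rankOne {F : Type*} [Field F] {n : ℕ} (a b c : Fin n → F)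
    (hab : (1 + ∑ i, a i * b i) ≠ 0) :
    c ᵥ* (1 + vecMulVec b a)⁻¹ = c + (c ⬝ᵥ (-(1 + ∑ i, a i * b i)⁻¹ • b)) • a := by
  have hab' : 1 + a ⬝ᵥ b ≠ 0 := hab
  change c ᵥ* (1 + vecMulVec b a)⁻¹ = c + (c ⬝ᵥ (-(1 + a ⬝ᵥ b)⁻¹ • b)) • a
  have hinv : (1 + vecMulVec b a)⁻¹ = 1 - (1 + a ⬝ᵥ b)⁻¹ • vecMulVec b a := by
    apply Matrix.inv_eq_right_inv
    have h2 : vecMulVec b a * vecMulVec b a = (a ⬝ᵥ b) • vecMulVec b a := by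
      rw [vecMulVec_mul_vecMulVec, vecMulVec_smul]
    rw [mul_sub, add_mul, mul_smul_comm, one_mul, mul_one, add_mul, h2, one_mul]
    ext i j
    simp only [Matrix.sub_apply, Matrix.add_apply, Matrix.smul_apply, smul_eq_mul]
    field_simp
    ring
  rw [hinv, vecMul_sub, vecMul_one, vecMul_smul, vecMul_vecMulVec, dotProduct_smul, smul_smul,
    smul_eq_mul, neg_mul, neg_smul, sub_eq_add_neg]

/-- Proposition 3: in the Baldi et al. setup with `C = GRS_k(x,y)`
and `λ ∉ C^⊥`, the square code of the public code satisfies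
`dim ⟨C_pub²⟩ ≤ 3k - 1`. -/
theorem dim_square_Cpub {F : Type*} [Field F] [Fintype F] (q n k : ℕ)
    (hq : Fintype.card F = q) (hk : 1 ≤ k) (hkn : k ≤ n) (hn : n ≤ q)
    (x y : Fin n → F) (hx : Function.Injective x) (hy : ∀ i, y i ≠ 0)
    (a b : Fin n → F) (hab : (1 + ∑ i, a i * b i) ≠ 0)
    (P : Matrix (Fin n) (Fin n) F) (hP : P = 1 + Matrix.vecMulVec b a)
    (lam : Fin n → F) (hlam : lam = -(1 + ∑ i, a i * b i)⁻¹ • b)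
    (C Cpub : Submodule F (Fin n → F))
    (hC : C = GRS n k x y) (hlamC : lam ∉ dualCode C)
    (hCpub : Cpub = C.map (Matrix.vecMulLinear P⁻¹)) :
    Module.finrank F ↥(starCode Cpub Cpub) ≤ 3 * k - 1 := by
  classical
  have hpub : ∀ w ∈ Cpub, ∃ c ∈ C, w = c + (c ⬝ᵥ lam) • a := by
    intro w hw
    rw [hCpub] at hw
    obtain ⟨c, hc, rfl⟩ := hw
    refine ⟨c, hc, ?_⟩
    rw [hP, hlam]
    exact vecMul_inv_rankOne a b c hab
  obtain ⟨c₀, hc₀, hl₀⟩ : ∃ c₀ ∈ C, c₀ ⬝ᵥ lam = 1 := by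
    have h : ∃ c ∈ C, lam ⬝ᵥ c ≠ 0 := by
      by_contra! h
      exact hlamC h
    obtain ⟨c, hc, h⟩ := h
    rw [dotProduct_comm] at h
    exact ⟨(c ⬝ᵥ lam)⁻¹ • c, C.smul_mem _ hc, by
      rw [smul_dotProduct, smul_eq_mul, inv_mul_cancel₀ h]⟩
  let ℓ : (Fin n → F) →ₗ[F] F :=
    { toFun := fun c => c ⬝ᵥ lam
      map_add' := fun u v => add_dotProduct u v lam
      map_smul' := fun t u => smul_dotProduct t u lam }
  set C₀ : Submodule F (Fin n → F) := C ⊓ LinearMap.ker ℓ with hC₀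
  have hC₀lt : C₀ < C := by
    refine lt_of_le_of_ne inf_le_left fun h => ?_
    have h1 : c₀ ∈ C₀ := h ▸ hc₀
    have h2 : c₀ ⬝ᵥ lam = 0 := h1.2
    exact one_ne_zero (hl₀.symm.trans h2)
  have hdim₀ : Module.finrank F C₀ < k :=
    (Submodule.finrank_lt_finrank_of_lt hC₀lt).trans_le (hC ▸ finrank_GRS_le n k x y)
  set d := c₀ + a with hd
  set S₁ := GRS n (2 * k - 1) x (y * y)
  set S₂ := C₀.map (LinearMap.mulLeft F d)
  set S₃ := Submodule.span F {d * d}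
  have hdec : ∀ w ∈ Cpub, ∃ u ∈ C₀, ∃ t : F, w = u + t • d := by
    intro w hw
    obtain ⟨c, hc, rfl⟩ := hpub w hw
    refine ⟨c - (c ⬝ᵥ lam) • c₀, ⟨C.sub_mem hc (C.smul_mem _ hc₀), ?_⟩, c ⬝ᵥ lam, ?_⟩
    · change (c - (c ⬝ᵥ lam) • c₀) ⬝ᵥ lam = 0
      rw [sub_dotProduct, smul_dotProduct, hl₀, smul_eq_mul, mul_one, sub_self]
    · rw [hd]; module
  have hle : starCode Cpub Cpub ≤ S₁ ⊔ S₂ ⊔ S₃ := by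
    refine Submodule.span_le.2 ?_
    rintro _ ⟨w, hw, w', hw', rfl⟩
    obtain ⟨u, hu, t, rfl⟩ := hdec w hw
    obtain ⟨u', hu', t', rfl⟩ := hdec w' hw'
    have hsplit : (u + t • d) * (u' + t' • d)
        = u * u' + d * (t' • u + t • u') + (t * t') • (d * d) := by
      funext i
      simp only [Pi.add_apply, Pi.mul_apply, Pi.smul_apply, smul_eq_mul]
      ring
    rw [hsplit]
    refine Submodule.add_mem_sup (Submodule.add_mem_sup ?_ ?_) ?_
    · exact mul_mem_GRS hk (hC ▸ hu.1) (hC ▸ hu'.1)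
    · exact ⟨_, C₀.add_mem (C₀.smul_mem _ hu) (C₀.smul_mem _ hu'), rfl⟩
    · exact Submodule.smul_mem _ _ (Submodule.mem_span_singleton_self _)
  have h₁ : Module.finrank F S₁ ≤ 2 * k - 1 := finrank_GRS_le _ _ _ _
  have h₂ : Module.finrank F S₂ ≤ Module.finrank F C₀ := Submodule.finrank_map_le _ _
  have h₃ : Module.finrank F S₃ ≤ 1 := by
    simpa using finrank_span_le_card (R := F) ({d * d} : Set (Fin n → F))
  have h₄ := Submodule.finrank_mono hle
  have h₅ := Submodule.finrank_add_le_finrank_add_finrank (S₁ ⊔ S₂) S₃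
  have h₆ := Submodule.finrank_add_le_finrank_add_finrank S₁ S₂
  omega
end

section
/- Let F be a finite field with q elements, 1 ≤ k ≤ n ≤ q, x ∈ F^n with pairwise distinct entries, y ∈ F^n with all entries nonzero, and let λ, a ∈ F^n. For i ≥ 0 write x^i for the component-wise i-th power (x_1^i,…,x_n^i). Assume there exists i₀ ∈ {0,…,k−1} with ⟨λ, y⋆x^{i₀}⟩ ≠ 0. For 0 ≤ i,j ≤ k−1 define v_{ij} := ⟨λ, y⋆x^j⟩·(y⋆x^i) + ⟨λ, y⋆x^i⟩·(y⋆x^j) + ⟨λ, y⋆x^i⟩⟨λ, y⋆x^j⟩·a. Then the subspace V of F^n spanned by all the v_{ij} has dimension at most k. -/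
/-!
Write `g i = y ⋆ x^i`, `c i = ⟨λ, g i⟩`, and `d i = g i - (c i / c i₀) g i₀`. Then
`v_{ij} = c j • d i + c i • d j + (c i * c j) • (a + (2 / c i₀) • g i₀)`,
and `d i₀ = 0`, so all the `v_{ij}` lie in the span of the `k - 1` vectors `d i` (`i ≠ i₀`)
together with the single vector `a + (2 / c i₀) • g i₀`.
-/

/-- The dimension bound for an arbitrary family `g` of vectors and arbitrary scalars `c` with
`c i₀ ≠ 0`. -/
theorem finrank_span_symm_le {F M : Type*} [Field F] [AddCommGroup M] [Module F M]
    (k : ℕ) (g : ℕ → M) (c : ℕ → F) (a : M) (i0 : ℕ) (hi0 : i0 < k) (hc : c i0 ≠ 0) :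
    Module.finrank F ↥(Submodule.span F
      {w : M | ∃ i < k, ∃ j < k, w = c j • g i + c i • g j + (c i * c j) • a}) ≤ k := by
  -- The slot `i₀`, where `d i₀ = 0`, is reused for the extra vector.
  let u : Fin k → M := fun i =>
    if (i : ℕ) = i0 then a + (2 / c i0) • g i0 else g i - (c i / c i0) • g i0
  have hd : ∀ i < k, g i - (c i / c i0) • g i0 ∈ Submodule.span F (Set.range u) := by
    intro i hi
    by_cases h : i = i0
    · subst h
      simp [div_self hc]
    · exact Submodule.subset_span ⟨⟨i, hi⟩, by simp [u, h]⟩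
  have he : a + (2 / c i0) • g i0 ∈ Submodule.span F (Set.range u) :=
    Submodule.subset_span ⟨⟨i0, hi0⟩, by simp [u]⟩
  have hle : Submodule.span F
      {w : M | ∃ i < k, ∃ j < k, w = c j • g i + c i • g j + (c i * c j) • a}
      ≤ Submodule.span F (Set.range u) := by
    rw [Submodule.span_le]
    rintro w ⟨i, hi, j, hj, rfl⟩
    have key : c j • g i + c i • g j + (c i * c j) • a
        = c j • (g i - (c i / c i0) • g i0) + c i • (g j - (c j / c i0) • g i0)
          + (c i * c j) • (a + (2 / c i0) • g i0) := by
      module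
    rw [key]
    exact add_mem (add_mem (Submodule.smul_mem _ _ (hd i hi)) (Submodule.smul_mem _ _ (hd j hj)))
      (Submodule.smul_mem _ _ he)
  have : FiniteDimensional F (Submodule.span F (Set.range u)) :=
    FiniteDimensional.span_of_finite F (Set.finite_range u)
  calc _ ≤ Module.finrank F (Submodule.span F (Set.range u)) := Submodule.finrank_mono hle
    _ ≤ k := by simpa [Set.finrank] using finrank_range_le_card (R := F) u

/-- Lemma 5: let `λ, a ∈ F^n` and suppose `⟨λ, y ⋆ x^{i₀}⟩ ≠ 0` for some
`i₀ ∈ {0,…,k-1}`. Then the span `V` of the vectors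
`v_{ij} = ⟨λ, y⋆x^j⟩ (y⋆x^i) + ⟨λ, y⋆x^i⟩ (y⋆x^j) + ⟨λ, y⋆x^i⟩⟨λ, y⋆x^j⟩ a`
for `0 ≤ i, j ≤ k-1` has dimension at most `k`. -/
theorem dim_V_le {F : Type*} [Field F] [Fintype F] (q n k : ℕ)
    (hq : Fintype.card F = q) (hk : 1 ≤ k) (hkn : k ≤ n) (hn : n ≤ q)
    (x y : Fin n → F) (hx : Function.Injective x) (hy : ∀ i, y i ≠ 0)
    (lam a : Fin n → F)
    (hi0 : ∃ i0 < k, (∑ t, lam t * (y t * x t ^ i0)) ≠ 0) :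
    Module.finrank F ↥(Submodule.span F
      {w : Fin n → F | ∃ i < k, ∃ j < k,
        w = (∑ t, lam t * (y t * x t ^ j)) • (y * x ^ i)
          + (∑ t, lam t * (y t * x t ^ i)) • (y * x ^ j)
          + ((∑ t, lam t * (y t * x t ^ i)) * (∑ t, lam t * (y t * x t ^ j))) • a}) ≤ k := by
  obtain ⟨i0, hlt, hne⟩ := hi0
  exact finrank_span_symm_le k (fun i => y * x ^ i) (fun i => ∑ t, lam t * (y t * x t ^ i)) a
    i0 hlt hne
end

section
/- Let F be a finite field, let D ⊆ F^n be a linear code of dimension k with basis g_1,…,g_k, and let z_1, z_2, z_3 ∈ D be linearly independent. Then the subspace B of F^n spanned by the 3k vectors {z_i ⋆ g_j : 1 ≤ i ≤ 3, 1 ≤ j ≤ k} satisfies dim(B) ≤ 3k − 3. -/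
/-!
The span `B` lies in the range of the linear map `φ : D³ → F^n`,
`φ (d₁, d₂, d₃) = z₁ ⋆ d₁ + z₂ ⋆ d₂ + z₃ ⋆ d₃`, whose domain has dimension `3k`.
Commutativity of `⋆` gives the three Koszul syzygies `(z₂, -z₁, 0)`, `(z₃, 0, -z₁)` and
`(0, z₃, -z₂)` in `ker φ`; they are linearly independent because the `zᵢ` are.
Rank-nullity then bounds the dimension of the range by `3k - 3`.
-/

/-- The map `D³ → F^n` sending `(d₁, d₂, d₃)` to `∑ zᵢ ⋆ dᵢ`. -/
def starMap {F : Type*} [Field F] {n : ℕ} (D : Submodule F (Fin n → F))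
    (z : Fin 3 → Fin n → F) : (Fin 3 → D) →ₗ[F] (Fin n → F) :=
  ∑ i, LinearMap.mulLeft F (z i) ∘ₗ D.subtype ∘ₗ LinearMap.proj i

theorem starMap_apply {F : Type*} [Field F] {n : ℕ} (D : Submodule F (Fin n → F))
    (z : Fin 3 → Fin n → F) (d : Fin 3 → D) :
    starMap D z d = ∑ i, z i * (d i : Fin n → F) := by
  simp [starMap]

/-- The Koszul syzygies of `z` are three independent elements of the kernel. -/
theorem three_le_finrank_ker {F : Type*} [Field F] {n : ℕ} (D : Submodule F (Fin n → F))
    (z : Fin 3 → Fin n → F) (hz : ∀ i, z i ∈ D) (hzli : LinearIndependent F z) :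
    3 ≤ Module.finrank F (LinearMap.ker (starMap D z)) := by
  let y : Fin 3 → D := fun i => ⟨z i, hz i⟩
  have hy : LinearIndependent F y := LinearIndependent.of_comp D.subtype hzli
  let s : Fin 3 → Fin 3 → D :=
    ![![y 1, -y 0, 0], ![y 2, 0, -y 0], ![0, y 2, -y 1]]
  have hker : ∀ i, s i ∈ LinearMap.ker (starMap D z) := by
    intro i
    rw [LinearMap.mem_ker, starMap_apply]
    fin_cases i <;> simp [s, y, Fin.sum_univ_three, mul_comm]
  have hs : LinearIndependent F s := by
    rw [Fintype.linearIndependent_iff] at hy ⊢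
    intro c hc
    have h0 : c 0 • y 1 + c 1 • y 2 = 0 := by
      simpa [s, Fin.sum_univ_three] using congrFun hc 0
    have h1 : -(c 0 • y 0) + c 2 • y 2 = 0 := by
      simpa [s, Fin.sum_univ_three] using congrFun hc 1
    have e0 := hy ![0, c 0, c 1] (by simpa [Fin.sum_univ_three] using h0)
    have e1 := hy ![-c 0, 0, c 2] (by simpa [Fin.sum_univ_three] using h1)
    intro i
    fin_cases i
    · simpa using e0 1
    · simpa using e0 2
    · simpa using e1 2
  have ht : LinearIndependent F
      (fun i => (⟨s i, hker i⟩ : LinearMap.ker (starMap D z))) :=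
    LinearIndependent.of_comp (LinearMap.ker (starMap D z)).subtype hs
  simpa using ht.fintype_card_le_finrank


/-- Proposition 4: if `D ⊆ F^n` is a linear code of dimension `k`
with basis `g_1,…,g_k`, and `z_1, z_2, z_3 ∈ D` are linearly independent, then the
span of the `3k` vectors `z_i ⋆ g_j` has dimension at most `3k - 3`. -/
theorem dim_B_le {F : Type*} [Field F] [Fintype F] {n k : ℕ}
    (D : Submodule F (Fin n → F))
    (g : Fin k → Fin n → F) (hgli : LinearIndependent F g)
    (hgspan : Submodule.span F (Set.range g) = D)
    (z : Fin 3 → Fin n → F) (hz : ∀ i, z i ∈ D) (hzli : LinearIndependent F z) :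
    Module.finrank F ↥(Submodule.span F
      {w : Fin n → F | ∃ i : Fin 3, ∃ j : Fin k, w = z i * g j}) ≤ 3 * k - 3 := by
  have hD : Module.finrank F D = k := by
    rw [← hgspan, finrank_span_eq_card hgli, Fintype.card_fin]
  have hle : Submodule.span F {w : Fin n → F | ∃ i : Fin 3, ∃ j : Fin k, w = z i * g j} ≤
      LinearMap.range (starMap D z) := by
    rw [Submodule.span_le]
    rintro w ⟨i, j, rfl⟩
    have hg : g j ∈ D := hgspan ▸ Submodule.subset_span ⟨j, rfl⟩
    refine ⟨Pi.single i ⟨g j, hg⟩, ?_⟩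
    rw [starMap_apply, Finset.sum_eq_single i]
    · simp
    · intro b _ hb
      simp [Pi.single_eq_of_ne hb]
    · simp
  have hrn := LinearMap.finrank_range_add_finrank_ker (starMap D z)
  have hdom : Module.finrank F (Fin 3 → D) = 3 * k := by
    simp [Module.finrank_pi_fintype, hD]
  have h3 := three_le_finrank_ker D z hz hzli
  have hmono := Submodule.finrank_mono hle
  omega
end

section
/- In the setup below, let C_{λ⊥} := C ∩ ⟨λ⟩^⊥ = {p ∈ C : ⟨λ,p⟩ = 0}, let g_1,…,g_k be any elements of C_pub, and let z_1, z_2, z_3 ∈ C_{λ⊥}. Then for all i ∈ {1,2,3} and j ∈ {1,…,k}, z_i ⋆ g_j ∈ ⟨C²⟩ + span(z_1⋆a) + span(z_2⋆a) + span(z_3⋆a). -/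
/-- If `x = p P⁻¹` with `P = 1 + bᵀa` invertible, then `x P = p`, i.e. `x = p - ⟨x,b⟩ a`: words of the
public code are words of the secret code up to a multiple of `a`. -/
lemma vecMul_inv_eq {F : Type*} [Field F] {n : ℕ} (a b p : Fin n → F)
    (hab : (1 + ∑ i, a i * b i) ≠ 0) :
    ∃ c : F, Matrix.vecMul p (1 + Matrix.vecMulVec b a)⁻¹ = p + c • a := by
  have hdet : IsUnit (1 + Matrix.vecMulVec b a).det := by
    rw [Matrix.vecMulVec_eq Unit, Matrix.det_one_add_replicateCol_mul_replicateRow]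
    exact isUnit_iff_ne_zero.mpr hab
  set x := Matrix.vecMul p (1 + Matrix.vecMulVec b a)⁻¹ with hx
  have h : Matrix.vecMul x (1 + Matrix.vecMulVec b a) = p := by
    rw [hx, Matrix.vecMul_vecMul, Matrix.nonsing_inv_mul _ hdet, Matrix.vecMul_one]
  rw [Matrix.vecMul_add, Matrix.vecMul_one, Matrix.vecMul_vecMulVec] at h
  refine ⟨-(x ⬝ᵥ b), ?_⟩
  rw [← h, neg_smul, add_neg_cancel_right]

/-- Proposition 5, first part: in the Baldi et al. setup, if
`z_1, z_2, z_3 ∈ C_{λ⊥} = {p ∈ C : ⟨λ,p⟩ = 0}` and `g_1,…,g_k ∈ C_pub`, then for all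
`i, j`, `z_i ⋆ g_j ∈ ⟨C²⟩ + span(z_1⋆a) + span(z_2⋆a) + span(z_3⋆a)`. -/
theorem star_mem_of_Clambda {F : Type*} [Field F] [Fintype F] {n k : ℕ} (a b : Fin n → F)
    (hab : (1 + ∑ i, a i * b i) ≠ 0)
    (P : Matrix (Fin n) (Fin n) F) (hP : P = 1 + Matrix.vecMulVec b a)
    (lam : Fin n → F) (hlam : lam = -(1 + ∑ i, a i * b i)⁻¹ • b)
    (C Cpub : Submodule F (Fin n → F))
    (hCpub : Cpub = C.map (Matrix.vecMulLinear P⁻¹))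
    (g : Fin k → Fin n → F) (hg : ∀ j, g j ∈ Cpub)
    (z : Fin 3 → Fin n → F) (hz : ∀ i, z i ∈ C ∧ ∑ t, lam t * z i t = 0) :
    ∀ (i : Fin 3) (j : Fin k),
      z i * g j ∈ starCode C C ⊔ Submodule.span F {z 0 * a}
        ⊔ Submodule.span F {z 1 * a} ⊔ Submodule.span F {z 2 * a} := by
  intro i j
  have hgj := hg j
  rw [hCpub, hP] at hgj
  obtain ⟨p, hp, hpg⟩ := hgj
  obtain ⟨c, hc⟩ := vecMul_inv_eq a b p hab
  rw [Matrix.vecMulLinear_apply, hc] at hpg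
  rw [← hpg, mul_add, mul_smul_comm]
  refine add_mem ?_ (Submodule.smul_mem _ _ ?_)
  · have h : z i * p ∈ starCode C C := Submodule.subset_span ⟨z i, (hz i).1, p, hp, rfl⟩
    exact Submodule.mem_sup_left (Submodule.mem_sup_left (Submodule.mem_sup_left h))
  · have h : z i * a ∈ Submodule.span F {z i * a} := Submodule.mem_span_singleton_self _
    fin_cases i
    · exact Submodule.mem_sup_left (Submodule.mem_sup_left (Submodule.mem_sup_right h))
    · exact Submodule.mem_sup_left (Submodule.mem_sup_right h)
    · exact Submodule.mem_sup_right h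
end

section
/- In the setup below, assume λ ∉ C^⊥ and C_pub ≠ C. Then C_pub ∩ C = {p ∈ C : ⟨p,λ⟩ = 0}. -/
/-- The rank-one perturbation `1 + bᵀa` has inverse `1 + λᵀa`, where
`λ = -(1 + ⟨a,b⟩)⁻¹ b`. -/
theorem rankOne_mul_inv {F : Type*} [Field F] {n : ℕ} (a b : Fin n → F)
    (hab : (1 + ∑ i, a i * b i) ≠ 0) :
    (1 + Matrix.vecMulVec b a) *
      (1 + Matrix.vecMulVec (-(1 + ∑ i, a i * b i)⁻¹ • b) a) = 1 := by
  have hdot : a ⬝ᵥ b = ∑ i, a i * b i := rfl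
  rw [add_mul, mul_add, mul_add, one_mul, one_mul, mul_one, Matrix.vecMulVec_mul_vecMulVec]
  ext i j
  simp only [Matrix.add_apply, Matrix.vecMulVec_apply, Pi.smul_apply, smul_eq_mul,
    dotProduct_smul, hdot]
  field_simp
  ring

theorem vecMul_one_add_vecMulVec {F : Type*} [Field F] {n : ℕ} (a b p : Fin n → F) :
    Matrix.vecMul p (1 + Matrix.vecMulVec b a) = p + (∑ i, p i * b i) • a := by
  rw [Matrix.vecMul_add, Matrix.vecMul_one, Matrix.vecMul_vecMulVec]
  rfl

/-- Lemma 8, Eq. (16): in the Baldi et al. setup with `λ ∉ C^⊥` and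
`C_pub ≠ C`, one has `C_pub ∩ C = {p ∈ C : ⟨p,λ⟩ = 0}`. -/
theorem inter_Cpub_C {F : Type*} [Field F] [Fintype F] {n k : ℕ} (a b : Fin n → F)
    (hab : (1 + ∑ i, a i * b i) ≠ 0)
    (P : Matrix (Fin n) (Fin n) F) (hP : P = 1 + Matrix.vecMulVec b a)
    (lam : Fin n → F) (hlam : lam = -(1 + ∑ i, a i * b i)⁻¹ • b)
    (C Cpub : Submodule F (Fin n → F)) (hk : Module.finrank F ↥C = k)
    (hCpub : Cpub = C.map (Matrix.vecMulLinear P⁻¹))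
    (hlamC : lam ∉ dualCode C) (hne : Cpub ≠ C) :
    ((Cpub ⊓ C : Submodule F (Fin n → F)) : Set (Fin n → F)) =
      {p | p ∈ C ∧ ∑ i, p i * lam i = 0} := by
  have hmul : P * (1 + Matrix.vecMulVec lam a) = 1 := by
    rw [hP, hlam]
    exact rankOne_mul_inv a b hab
  have hinv : P⁻¹ = 1 + Matrix.vecMulVec lam a := Matrix.inv_eq_right_inv hmul
  have hmem : ∀ x, x ∈ Cpub ↔ ∃ p ∈ C, p + (∑ i, p i * lam i) • a = x := by
    intro x
    simp only [hCpub, hinv, Submodule.mem_map, Matrix.vecMulLinear_apply,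
      vecMul_one_add_vecMulVec]
  have ha : a ∉ C := by
    intro ha
    apply hne
    ext x
    rw [hmem]
    constructor
    · rintro ⟨p, hp, rfl⟩
      exact C.add_mem hp (C.smul_mem _ ha)
    · intro hx
      -- The preimage of `x` under `P⁻¹` is `x P = x + ⟨x,b⟩ a`.
      refine ⟨Matrix.vecMul x P, ?_, ?_⟩
      · rw [hP, vecMul_one_add_vecMulVec]
        exact C.add_mem hx (C.smul_mem _ ha)
      · rw [← vecMul_one_add_vecMulVec, Matrix.vecMul_vecMul, hmul, Matrix.vecMul_one]
  ext x
  simp only [SetLike.mem_coe, Submodule.mem_inf, Set.mem_setOf_eq, hmem]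
  constructor
  · rintro ⟨⟨p, hp, rfl⟩, hx⟩
    have hs : (∑ i, p i * lam i) • a ∈ C := (C.add_mem_iff_right hp).1 hx
    have h0 : ∑ i, p i * lam i = 0 := by
      by_contra h
      exact ha ((C.smul_mem_iff h).1 hs)
    rw [h0, zero_smul, add_zero]
    exact ⟨hp, h0⟩
  · rintro ⟨hx, h0⟩
    exact ⟨⟨x, hx, by rw [h0, zero_smul, add_zero]⟩, hx⟩
end

section
/- In the setup below, assume λ ∉ C^⊥ and C_pub ≠ C. Then C_pub^⊥ ∩ C^⊥ = {p ∈ C^⊥ : ⟨p,a⟩ = 0}. -/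
/-- The Sherman–Morrison formula for a rank-one perturbation of the identity. -/
theorem inv_one_add_vecMulVec {F : Type*} [Field F] {n : ℕ} (a b : Fin n → F)
    (hab : (1 + ∑ i, a i * b i) ≠ 0) :
    (1 + Matrix.vecMulVec b a)⁻¹ =
      1 + Matrix.vecMulVec (-(1 + ∑ i, a i * b i)⁻¹ • b) a := by
  apply Matrix.inv_eq_right_inv
  have hs : (1 + a ⬝ᵥ b) ≠ 0 := hab
  change _ * (1 + Matrix.vecMulVec (-(1 + a ⬝ᵥ b)⁻¹ • b) a) = 1
  rw [Matrix.smul_vecMulVec, add_mul, mul_add, mul_add, one_mul, one_mul, mul_one,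
    Matrix.mul_smul, Matrix.vecMulVec_mul_vecMulVec, Matrix.vecMulVec_smul]
  ext i j
  simp only [Matrix.add_apply, Matrix.smul_apply, smul_eq_mul]
  field_simp
  ring

/-- Lemma 8, Eq. (17): in the Baldi et al. setup with `λ ∉ C^⊥` and
`C_pub ≠ C`, one has `C_pub^⊥ ∩ C^⊥ = {p ∈ C^⊥ : ⟨p,a⟩ = 0}`. -/
theorem inter_Cpub_C_dual {F : Type*} [Field F] [Fintype F] {n k : ℕ} (a b : Fin n → F)
    (hab : (1 + ∑ i, a i * b i) ≠ 0)
    (P : Matrix (Fin n) (Fin n) F) (hP : P = 1 + Matrix.vecMulVec b a)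
    (lam : Fin n → F) (hlam : lam = -(1 + ∑ i, a i * b i)⁻¹ • b)
    (C Cpub : Submodule F (Fin n → F)) (hk : Module.finrank F ↥C = k)
    (hCpub : Cpub = C.map (Matrix.vecMulLinear P⁻¹))
    (hlamC : lam ∉ dualCode C) (hne : Cpub ≠ C) :
    ((dualCode Cpub ⊓ dualCode C : Submodule F (Fin n → F)) : Set (Fin n → F)) =
      {p | p ∈ dualCode C ∧ ∑ i, p i * a i = 0} := by
  have hinv : P⁻¹ = 1 + Matrix.vecMulVec lam a := by
    rw [hP, hlam]
    exact inv_one_add_vecMulVec a b hab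
  have key : ∀ u c : Fin n → F, ∑ i, u i * (Matrix.vecMul c P⁻¹) i =
      ∑ i, u i * c i + (∑ i, lam i * c i) * ∑ i, u i * a i := by
    intro u c
    change u ⬝ᵥ (Matrix.vecMul c P⁻¹) = u ⬝ᵥ c + (lam ⬝ᵥ c) * (u ⬝ᵥ a)
    rw [hinv, Matrix.vecMul_add, Matrix.vecMul_one, Matrix.vecMul_vecMulVec, dotProduct_add,
      dotProduct_smul, dotProduct_comm lam c, smul_eq_mul]
  -- A codeword that detects `lam ∉ C^⊥`.
  obtain ⟨c₀, hc₀, hne₀⟩ : ∃ c ∈ C, ∑ i, lam i * c i ≠ 0 := by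
    by_contra! h
    exact hlamC h
  subst hCpub
  ext u
  constructor
  · rintro ⟨hpub, hC⟩
    refine ⟨hC, ?_⟩
    have h := hpub _ (Submodule.mem_map_of_mem hc₀)
    rw [Matrix.vecMulLinear_apply, key, hC c₀ hc₀, zero_add] at h
    exact (mul_eq_zero.mp h).resolve_left hne₀
  · rintro ⟨hC, ha⟩
    refine ⟨?_, hC⟩
    rintro _ ⟨c, hc, rfl⟩
    rw [Matrix.vecMulLinear_apply, key, hC c hc, ha, mul_zero, add_zero]
end

section
/- In the setup below, assume λ ∉ C^⊥ and C_pub ≠ C. Then dim(C_pub^⊥ ∩ C^⊥) = n − k − 1. -/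
theorem mem_dualCode_iff {F : Type*} [Field F] {n : ℕ} {C : Submodule F (Fin n → F)}
    {u : Fin n → F} : u ∈ dualCode C ↔ ∀ c ∈ C, u ⬝ᵥ c = 0 := Iff.rfl

theorem finrank_add_finrank_dualCode {F : Type*} [Field F] {n : ℕ}
    (D : Submodule F (Fin n → F)) :
    Module.finrank F D + Module.finrank F (dualCode D) = n := by
  have h : (dualCode D).map (dotProductEquiv F (Fin n)).toLinearMap = D.dualAnnihilator := by
    ext f
    obtain ⟨u, rfl⟩ := (dotProductEquiv F (Fin n)).surjective f
    simp [Submodule.mem_dualAnnihilator, mem_dualCode_iff]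
  have h2 := Subspace.finrank_add_finrank_dualAnnihilator_eq D
  rw [← h, LinearEquiv.finrank_map_eq, Module.finrank_fin_fun] at h2
  exact h2

/-- in the Baldi et al. setup with `λ ∉ C^⊥` and `C_pub ≠ C`,
`dim (C_pub^⊥ ∩ C^⊥) = n - k - 1`. -/
theorem dim_inter_dual {F : Type*} [Field F] [Fintype F] {n k : ℕ} (a b : Fin n → F)
    (hab : (1 + ∑ i, a i * b i) ≠ 0)
    (P : Matrix (Fin n) (Fin n) F) (hP : P = 1 + Matrix.vecMulVec b a)
    (lam : Fin n → F) (hlam : lam = -(1 + ∑ i, a i * b i)⁻¹ • b)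
    (C Cpub : Submodule F (Fin n → F)) (hk : Module.finrank F ↥C = k)
    (hCpub : Cpub = C.map (Matrix.vecMulLinear P⁻¹))
    (hlamC : lam ∉ dualCode C) (hne : Cpub ≠ C) :
    Module.finrank F ↥(dualCode Cpub ⊓ dualCode C) = n - k - 1 := by
  have hPQ : P * (1 + Matrix.vecMulVec lam a) = 1 := by
    change (1 + a ⬝ᵥ b) ≠ 0 at hab
    change lam = -(1 + a ⬝ᵥ b)⁻¹ • b at hlam
    rw [hP, hlam, mul_add, add_mul, add_mul, Matrix.vecMulVec_mul_vecMulVec]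
    ext i j
    simp [Matrix.vecMulVec_apply]
    field_simp
    ring
  have hinv : P⁻¹ = 1 + Matrix.vecMulVec lam a := Matrix.inv_eq_right_inv hPQ
  have happ : ∀ p : Fin n → F, Matrix.vecMulLinear P⁻¹ p = p + (p ⬝ᵥ lam) • a := by
    intro p
    rw [Matrix.vecMulLinear_apply, hinv, Matrix.vecMul_add, Matrix.vecMul_one,
      Matrix.vecMul_vecMulVec]
  have hinj : Function.Injective (Matrix.vecMulLinear P⁻¹) := by
    have hQP : P⁻¹ * P = 1 := by
      rw [hinv]; exact mul_eq_one_comm.mp hPQ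
    intro x y hxy
    have := congrArg (fun z => Matrix.vecMul z P) hxy
    simpa [Matrix.vecMul_vecMul, hQP] using this
  have ha : a ∉ C := by
    intro ha
    apply hne
    apply Submodule.eq_of_le_of_finrank_eq
    · rw [hCpub, Submodule.map_le_iff_le_comap]
      intro p hp
      rw [Submodule.mem_comap, happ]
      exact C.add_mem hp (C.smul_mem _ ha)
    · rw [hCpub]
      exact (Submodule.equivMapOfInjective _ hinj C).finrank_eq.symm
  have hdual : dualCode Cpub ⊓ dualCode C = dualCode (C ⊔ F ∙ a) := by
    ext u
    simp only [Submodule.mem_inf, mem_dualCode_iff]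
    constructor
    · rintro ⟨h1, h2⟩ c hc
      obtain ⟨p, hp, hpl⟩ : ∃ p ∈ C, lam ⬝ᵥ p ≠ 0 := by
        by_contra! h
        exact hlamC h
      have hua : u ⬝ᵥ a = 0 := by
        have := h1 _ (hCpub ▸ Submodule.mem_map_of_mem hp)
        rw [happ, dotProduct_add, h2 p hp, dotProduct_smul, zero_add, smul_eq_mul,
          dotProduct_comm p] at this
        exact (mul_eq_zero.mp this).resolve_left hpl
      obtain ⟨x, hx, y, hy, rfl⟩ := Submodule.mem_sup.mp hc
      obtain ⟨t, rfl⟩ := Submodule.mem_span_singleton.mp hy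
      rw [dotProduct_add, dotProduct_smul, h2 x hx, hua, smul_zero, add_zero]
    · intro h
      refine ⟨fun c hc => ?_, fun c hc => h c (Submodule.mem_sup_left hc)⟩
      rw [hCpub] at hc
      obtain ⟨p, hp, rfl⟩ := hc
      rw [happ]
      exact h _ (Submodule.add_mem_sup hp
        (Submodule.smul_mem _ _ (Submodule.mem_span_singleton_self a)))
  have hdim : Module.finrank F ↥(C ⊔ F ∙ a) = k + 1 := by
    have ha0 : a ≠ 0 := fun h => ha (h ▸ C.zero_mem)
    have h := Submodule.finrank_sup_add_finrank_inf_eq C (F ∙ a)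
    have hdisj : C ⊓ F ∙ a = ⊥ :=
      disjoint_iff.mp ((Submodule.disjoint_span_singleton' ha0).mpr ha)
    rw [hdisj, finrank_bot, finrank_span_singleton ha0, hk] at h
    exact h
  have h := finrank_add_finrank_dualCode (C ⊔ F ∙ a)
  rw [hdual]
  omega
end

section
/- In the setup below, assume λ ∉ C^⊥ and C_pub ≠ C. Then (C_pub ∩ C)^⊥ = C^⊥ + span(b), where span(b) denotes the line spanned by the vector b. -/
/-- If `D` is the hyperplane section of `C` by `b^⊥`, and `b` does not vanish at some `p ∈ C`, then
the dual of `D` is `C^⊥ + span(b)`. -/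
theorem dualCode_eq_sup_span {F : Type*} [Field F] {n : ℕ} {C D : Submodule F (Fin n → F)}
    {b p : Fin n → F} (hD : ∀ c, c ∈ D ↔ c ∈ C ∧ b ⬝ᵥ c = 0) (hp : p ∈ C) (hbp : b ⬝ᵥ p ≠ 0) :
    dualCode D = dualCode C ⊔ Submodule.span F {b} := by
  apply le_antisymm
  · intro u hu
    rw [mem_dualCode_iff] at hu
    rw [Submodule.mem_sup]
    refine ⟨u - (u ⬝ᵥ p / b ⬝ᵥ p) • b, ?_, (u ⬝ᵥ p / b ⬝ᵥ p) • b,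
      Submodule.smul_mem _ _ (Submodule.mem_span_singleton_self b), sub_add_cancel _ _⟩
    rw [mem_dualCode_iff]
    intro c hc
    -- the projection of `c` onto `b^⊥` along `p` lies in `D`
    have h := hu (c - (b ⬝ᵥ c / b ⬝ᵥ p) • p) ((hD _).2
      ⟨C.sub_mem hc (C.smul_mem _ hp), by
        rw [dotProduct_sub, dotProduct_smul, smul_eq_mul, div_mul_cancel₀ _ hbp, sub_self]⟩)
    rw [dotProduct_sub, dotProduct_smul, smul_eq_mul] at h
    rw [sub_dotProduct, smul_dotProduct, smul_eq_mul, ← h]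
    ring
  · refine sup_le (fun u hu c hc => hu c ((hD c).1 hc).1) ?_
    rw [Submodule.span_singleton_le_iff_mem]
    exact fun c hc => ((hD c).1 hc).2

/-- Eq. (31): in the Baldi et al. setup with `λ ∉ C^⊥` and
`C_pub ≠ C`, one has `(C_pub ∩ C)^⊥ = C^⊥ + span(b)`. -/
theorem dual_inter_Cpub_C {F : Type*} [Field F] [Fintype F] {n k : ℕ} (a b : Fin n → F)
    (hab : (1 + ∑ i, a i * b i) ≠ 0)
    (P : Matrix (Fin n) (Fin n) F) (hP : P = 1 + Matrix.vecMulVec b a)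
    (lam : Fin n → F) (hlam : lam = -(1 + ∑ i, a i * b i)⁻¹ • b)
    (C Cpub : Submodule F (Fin n → F)) (hk : Module.finrank F ↥C = k)
    (hCpub : Cpub = C.map (Matrix.vecMulLinear P⁻¹))
    (hlamC : lam ∉ dualCode C) (hne : Cpub ≠ C) :
    dualCode (Cpub ⊓ C) = dualCode C ⊔ Submodule.span F {b} := by
  classical
  set s : F := 1 + ∑ i, a i * b i with hs
  have hsdot : a ⬝ᵥ b = s - 1 := by simp [hs, dotProduct]
  have hvP : ∀ p : Fin n → F, Matrix.vecMul p P = p + (p ⬝ᵥ b) • a := by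
    intro p
    rw [hP, Matrix.vecMul_add, Matrix.vecMul_one, Matrix.vecMul_vecMulVec]
  have hinv : P * (1 - s⁻¹ • Matrix.vecMulVec b a) = 1 := by
    have h2 : Matrix.vecMulVec b a * Matrix.vecMulVec b a
        = (s - 1) • Matrix.vecMulVec b a := by
      rw [Matrix.vecMulVec_mul_vecMulVec, hsdot, Matrix.vecMulVec_smul]
    rw [hP, add_mul, mul_sub, mul_sub, mul_smul_comm, mul_smul_comm, h2, one_mul, one_mul,
      mul_one, smul_smul, mul_sub, inv_mul_cancel₀ hab]
    module
  have hPinv : P⁻¹ = 1 - s⁻¹ • Matrix.vecMulVec b a := Matrix.inv_eq_right_inv hinv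
  have hvPi : ∀ p : Fin n → F, Matrix.vecMul p P⁻¹ = p - (s⁻¹ * (b ⬝ᵥ p)) • a := by
    intro p
    rw [hPinv, Matrix.vecMul_sub, Matrix.vecMul_one, Matrix.vecMul_smul,
      Matrix.vecMul_vecMulVec, smul_smul, dotProduct_comm]
  have hmem : ∀ c, c ∈ Cpub ↔ ∃ p ∈ C, Matrix.vecMul p P⁻¹ = c := by
    intro c
    rw [hCpub]
    rfl
  have ha : a ∉ C := by
    intro ha
    apply hne
    apply le_antisymm
    · intro c hc
      obtain ⟨p, hp, rfl⟩ := (hmem c).1 hc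
      rw [hvPi]
      exact C.sub_mem hp (C.smul_mem _ ha)
    · intro c hc
      refine (hmem c).2 ⟨Matrix.vecMul c P, ?_, ?_⟩
      · rw [hvP]
        exact C.add_mem hc (C.smul_mem _ ha)
      · rw [Matrix.vecMul_vecMul, hPinv, hinv, Matrix.vecMul_one]
  obtain ⟨p, hp, hbp⟩ : ∃ p ∈ C, b ⬝ᵥ p ≠ 0 := by
    by_contra! h
    apply hlamC
    rw [hlam]
    exact (dualCode C).smul_mem _ (mem_dualCode_iff.2 h)
  refine dualCode_eq_sup_span (fun c => ?_) hp hbp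
  rw [Submodule.mem_inf, hmem]
  constructor
  · rintro ⟨⟨p, hp, rfl⟩, hc⟩
    refine ⟨hc, ?_⟩
    rw [hvPi] at hc ⊢
    have h1 : (s⁻¹ * (b ⬝ᵥ p)) • a ∈ C := by
      simpa using C.sub_mem hp hc
    have h0 : s⁻¹ * (b ⬝ᵥ p) = 0 := by
      by_contra h0
      exact ha ((C.smul_mem_iff h0).1 h1)
    have hb : b ⬝ᵥ p = 0 := (mul_eq_zero.1 h0).resolve_left (inv_ne_zero hab)
    simp [hb]
  · rintro ⟨hc, hb⟩
    exact ⟨⟨c, hc, by simp [hvPi, hb]⟩, hc⟩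
end

section
/- In the setup below, assume λ ∉ C^⊥ and C_pub ≠ C. Let r₁ ∈ C_pub^⊥ \ C^⊥, let b₀ ∈ (C_pub ∩ C)^⊥ \ C^⊥ and a₀ ∈ (C_pub^⊥ ∩ C^⊥)^⊥ \ C satisfy ⟨a₀,r₁⟩ ≠ 0 and ⟨a₀,b₀⟩ = 0, and let p₁ ∈ C \ C_pub. Then ⟨b₀,p₁⟩ ≠ 0, and setting γ := −⟨p₁,r₁⟩ / (⟨b₀,p₁⟩·⟨a₀,r₁⟩), the pair (a₀, γb₀) is a valid (a,λ) pair for (C_pub, C): that is, ⟨a₀, γb₀⟩ ≠ −1, and for every c ∈ C_pub there exists p ∈ C such that c = p + γ⟨b₀,p⟩·a₀. -/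
theorem dualCode_dualCode_le {F : Type*} [Field F] {n : ℕ} (W : Submodule F (Fin n → F)) :
    dualCode (dualCode W) ≤ W := by
  intro x hx
  by_contra hxW
  obtain ⟨f, hfx, hfW⟩ := Submodule.exists_le_ker_of_notMem hxW
  have hf : ∀ y : Fin n → F, f y = ∑ i, f (Pi.single i 1) * y i := by
    intro y
    conv_lhs => rw [pi_eq_sum_univ' y]
    simp [map_sum, mul_comm]
  refine hfx ?_
  rw [hf]
  have h := hx (fun i => f (Pi.single i 1)) (fun c hc => by
    rw [← hf]
    exact hfW hc)
  simpa only [mul_comm] using h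

theorem vecMul_inv_one_add_vecMulVec {F : Type*} [Field F] {n : ℕ} (a b p : Fin n → F)
    (hab : 1 + a ⬝ᵥ b ≠ 0) :
    Matrix.vecMul p (1 + Matrix.vecMulVec b a)⁻¹ = p + (-(1 + a ⬝ᵥ b)⁻¹ * (b ⬝ᵥ p)) • a := by
  have hinv : (1 + Matrix.vecMulVec b a)⁻¹ = 1 - (1 + a ⬝ᵥ b)⁻¹ • Matrix.vecMulVec b a := by
    apply Matrix.inv_eq_right_inv
    have hsq : Matrix.vecMulVec b a * Matrix.vecMulVec b a = (a ⬝ᵥ b) • Matrix.vecMulVec b a := by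
      rw [Matrix.vecMulVec_mul_vecMulVec, Matrix.vecMulVec_smul]
    rw [add_mul, mul_sub, mul_sub, Matrix.mul_smul, Matrix.mul_smul, hsq]
    ext i j
    simp only [Matrix.add_apply, Matrix.sub_apply, Matrix.smul_apply, smul_eq_mul, one_mul, mul_one]
    field_simp
    ring
  rw [hinv, Matrix.vecMul_sub, Matrix.vecMul_smul, Matrix.vecMul_one, Matrix.vecMul_vecMulVec,
    dotProduct_comm p b, smul_smul, neg_mul, neg_smul, sub_eq_add_neg]

/-- Proposition 8: in the Baldi et al. setup with `λ ∉ C^⊥` and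
`C_pub ≠ C`, pick `r₁ ∈ C_pub^⊥ \ C^⊥`, `b₀ ∈ (C_pub ∩ C)^⊥ \ C^⊥`,
`a₀ ∈ (C_pub^⊥ ∩ C^⊥)^⊥ \ C` with `⟨a₀,r₁⟩ ≠ 0` and `⟨a₀,b₀⟩ = 0`, and
`p₁ ∈ C \ C_pub`. Then `⟨b₀,p₁⟩ ≠ 0` and, with
`γ = -⟨p₁,r₁⟩ / (⟨b₀,p₁⟩⟨a₀,r₁⟩)`, the pair `(a₀, γ b₀)` is a valid `(a,λ)`
pair for `(C_pub, C)`: `⟨a₀, γ b₀⟩ ≠ -1` and every `c ∈ C_pub` is of the form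
`p + γ ⟨b₀,p⟩ a₀` for some `p ∈ C`. -/
theorem valid_pair {F : Type*} [Field F] [Fintype F] {n k : ℕ} (a b : Fin n → F)
    (hab : (1 + ∑ i, a i * b i) ≠ 0)
    (P : Matrix (Fin n) (Fin n) F) (hP : P = 1 + Matrix.vecMulVec b a)
    (lam : Fin n → F) (hlam : lam = -(1 + ∑ i, a i * b i)⁻¹ • b)
    (C Cpub : Submodule F (Fin n → F)) (hk : Module.finrank F ↥C = k)
    (hCpub : Cpub = C.map (Matrix.vecMulLinear P⁻¹))
    (hlamC : lam ∉ dualCode C) (hne : Cpub ≠ C)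
    (r1 : Fin n → F) (hr1 : r1 ∈ dualCode Cpub) (hr1' : r1 ∉ dualCode C)
    (b0 : Fin n → F) (hb0 : b0 ∈ dualCode (Cpub ⊓ C)) (hb0' : b0 ∉ dualCode C)
    (a0 : Fin n → F) (ha0 : a0 ∈ dualCode (dualCode Cpub ⊓ dualCode C)) (ha0' : a0 ∉ C)
    (ha0r1 : (∑ i, a0 i * r1 i) ≠ 0) (ha0b0 : (∑ i, a0 i * b0 i) = 0)
    (p1 : Fin n → F) (hp1 : p1 ∈ C) (hp1' : p1 ∉ Cpub)
    (γ : F) (hγ : γ = -(∑ i, p1 i * r1 i) / ((∑ i, b0 i * p1 i) * (∑ i, a0 i * r1 i))) :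
    (∑ i, b0 i * p1 i) ≠ 0 ∧
    (∑ i, a0 i * (γ • b0) i) ≠ -1 ∧
    ∀ c ∈ Cpub, ∃ p ∈ C, c = p + (γ * ∑ i, b0 i * p i) • a0 := by
  have hdual : ∀ {W : Submodule F (Fin n → F)} {u : Fin n → F},
      u ∈ dualCode W ↔ ∀ c ∈ W, u ⬝ᵥ c = 0 := Iff.rfl
  simp only [← dotProduct.eq_1] at *
  have hmap : ∀ p, Matrix.vecMulLinear P⁻¹ p = p + (lam ⬝ᵥ p) • a := by
    intro p
    rw [Matrix.vecMulLinear_apply, hP, hlam, vecMul_inv_one_add_vecMulVec a b p hab,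
      smul_dotProduct, smul_eq_mul]
  have hpub : ∀ p ∈ C, p + (lam ⬝ᵥ p) • a ∈ Cpub := by
    intro p hp
    rw [hCpub, ← hmap]
    exact Submodule.mem_map_of_mem hp
  have hfix : ∀ p ∈ C, lam ⬝ᵥ p = 0 → p ∈ Cpub := by
    intro p hp h
    simpa [h] using hpub p hp
  have hlam1 : lam ⬝ᵥ p1 ≠ 0 := fun h => hp1' (hfix p1 hp1 h)
  have hdecomp : ∀ p ∈ C, ∃ q ∈ C, q ∈ Cpub ∧ lam ⬝ᵥ q = 0 ∧ ∃ s : F, p = q + s • p1 := by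
    intro p hp
    have hq : p - ((lam ⬝ᵥ p) / (lam ⬝ᵥ p1)) • p1 ∈ C := C.sub_mem hp (C.smul_mem _ hp1)
    have hq0 : lam ⬝ᵥ (p - ((lam ⬝ᵥ p) / (lam ⬝ᵥ p1)) • p1) = 0 := by
      rw [dotProduct_sub, dotProduct_smul, smul_eq_mul, div_mul_cancel₀ _ hlam1, sub_self]
    exact ⟨_, hq, hfix _ hq hq0, hq0, _, (sub_add_cancel _ _).symm⟩
  have hp1ne : ∀ u, (∀ q ∈ C, q ∈ Cpub → u ⬝ᵥ q = 0) → u ∉ dualCode C → u ⬝ᵥ p1 ≠ 0 := by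
    intro u hu hu' h
    refine hu' (hdual.2 fun p hp => ?_)
    obtain ⟨q, hq, hq', -, s, rfl⟩ := hdecomp p hp
    rw [dotProduct_add, dotProduct_smul, hu q hq hq', h, smul_zero, add_zero]
  have hb0q : ∀ q ∈ C, q ∈ Cpub → b0 ⬝ᵥ q = 0 := fun q hq hq' => hdual.1 hb0 q ⟨hq', hq⟩
  have hb0p1 : b0 ⬝ᵥ p1 ≠ 0 := hp1ne b0 hb0q hb0'
  have hr1p1 : r1 ⬝ᵥ p1 ≠ 0 := hp1ne r1 (fun q _ hq' => hdual.1 hr1 q hq') hr1'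
  refine ⟨hb0p1, ?_, ?_⟩
  · rw [dotProduct_smul, ha0b0, smul_zero]
    exact (neg_ne_zero.2 one_ne_zero).symm
  have hγb : γ * (b0 ⬝ᵥ p1) = -(r1 ⬝ᵥ p1) / (r1 ⬝ᵥ a0) := by
    rw [hγ, dotProduct_comm p1 r1, dotProduct_comm a0 r1]
    rw [dotProduct_comm] at ha0r1
    field_simp
  rw [dotProduct_comm] at ha0r1
  have hδ : γ * (b0 ⬝ᵥ p1) ≠ 0 := by
    rw [hγb]
    exact div_ne_zero (neg_ne_zero.2 hr1p1) ha0r1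
  obtain ⟨w, hw⟩ : ∃ w, w = p1 + (γ * (b0 ⬝ᵥ p1)) • a0 := ⟨_, rfl⟩
  have hwr : r1 ⬝ᵥ w = 0 := by
    rw [hw, dotProduct_add, dotProduct_smul, hγb, smul_eq_mul, div_mul_cancel₀ _ ha0r1,
      add_neg_cancel]
  have hwC : w ∉ C := by
    intro h
    refine ha0' ((C.smul_mem_iff hδ).1 ?_)
    have := C.sub_mem h hp1
    rwa [hw, add_sub_cancel_left] at this
  have ha0sup : a0 ∈ Cpub ⊔ C := by
    refine dualCode_dualCode_le _ (hdual.2 fun u hu => hdual.1 ha0 u ⟨?_, ?_⟩)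
    · exact hdual.2 fun c hc => hdual.1 hu c (Submodule.mem_sup_left hc)
    · exact hdual.2 fun c hc => hdual.1 hu c (Submodule.mem_sup_right hc)
  have hwpub : w ∈ Cpub := by
    have hwsup : w ∈ Cpub ⊔ C := by
      rw [hw]
      exact add_mem (Submodule.mem_sup_right hp1) (Submodule.smul_mem _ _ ha0sup)
    obtain ⟨c, hc, p, hp, hcp⟩ := Submodule.mem_sup.1 hwsup
    obtain ⟨q, -, hq', -, s, rfl⟩ := hdecomp p hp
    rw [← hcp, dotProduct_add, dotProduct_add, dotProduct_smul, hdual.1 hr1 c hc,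
      hdual.1 hr1 q hq', zero_add, zero_add, smul_eq_mul] at hwr
    have hs : s = 0 := (mul_eq_zero.1 hwr).resolve_right hr1p1
    rw [← hcp, hs, zero_smul, add_zero]
    exact add_mem hc hq'
  have hdecomp' : ∀ c ∈ Cpub, ∃ q ∈ C, q ∈ Cpub ∧
      ∃ s : F, c = q + s • (p1 + (lam ⬝ᵥ p1) • a) := by
    intro c hc
    rw [hCpub] at hc
    obtain ⟨p, hp, rfl⟩ := Submodule.mem_map.1 hc
    obtain ⟨q, hq, hq', hq0, s, rfl⟩ := hdecomp p hp
    refine ⟨q, hq, hq', s, ?_⟩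
    rw [map_add, map_smul, hmap, hmap, hq0, zero_smul, add_zero]
  intro c hc
  obtain ⟨q, hq, hq', s, hcs⟩ := hdecomp' c hc
  obtain ⟨q2, hq2, hq2', s2, hws⟩ := hdecomp' w hwpub
  have hs2 : s2 ≠ 0 := by
    rintro rfl
    rw [zero_smul, add_zero] at hws
    exact hwC (hws ▸ hq2)
  -- The coefficient `s / s2` comes from `c = q + (s / s2) • (w - q2)`.
  refine ⟨q - (s / s2) • q2 + (s / s2) • p1,
    add_mem (sub_mem hq (C.smul_mem _ hq2)) (C.smul_mem _ hp1), ?_⟩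
  have hcw : c = q - (s / s2) • q2 + (s / s2) • w := by
    rw [hcs, hws, smul_add (s / s2) q2, smul_smul (s / s2) s2, div_mul_cancel₀ _ hs2]
    abel
  rw [hcw, hw, dotProduct_add, dotProduct_sub, dotProduct_smul, dotProduct_smul,
    hb0q q hq hq', hb0q q2 hq2 hq2', smul_zero, sub_zero, zero_add, smul_eq_mul]
  module
end
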